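/- Let v ∉ [n]. If X is a d-hypertree on [n] and Y is a (d-1)-hypertree on [n] over F_2, then Ext_v(X,Y) = X ⊕ Cone_v(Y) is a d-hypertree on the vertex set [n] ∪ {v}. -/

import Mathlib

open Finset symmDiff

/-- The vertex set `[n] = {1, …, n}`. -/
def rng (n : ℕ) : Finset ℕ := Finset.Icc 1 n

/-- The set of `d`-simplices (i.e. `(d+1)`-element subsets) on the vertex set `V`. -/
def simplices (V : Finset ℕ) (d : ℕ) : Finset (Finset ℕ) :=
  V.powerset.filter fun σ => σ.card = d + 1

/-- The mod-2 boundary of a set `X` of simplices: the set of faces `τ` of codimension one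
(`|τ| + 1 = |σ|`) contained in an odd number of members of `X`. -/
def bd (X : Finset (Finset ℕ)) : Finset (Finset ℕ) :=
  (X.biUnion fun σ => σ.powerset).filter
    fun τ => Odd (X.filter fun σ => τ ⊆ σ ∧ τ.card + 1 = σ.card).card

/-- A set of simplices is acyclic (a forest) over `F_2` if no nonempty subset has
empty boundary. -/
def IsAcyclic (F : Finset (Finset ℕ)) : Prop :=
  ∀ Y ⊆ F, Y ≠ ∅ → bd Y ≠ ∅

/-- A `d`-hypertree on `V`: a maximal acyclic set of `d`-simplices on `V`. -/
def IsHypertreeOn (V : Finset ℕ) (d : ℕ) (T : Finset (Finset ℕ)) : Prop :=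
  T ⊆ simplices V d ∧ IsAcyclic T ∧
    ∀ G, T ⊆ G → G ⊆ simplices V d → IsAcyclic G → G = T

/-- A simple cycle over `F_2`: a nonempty set with empty boundary, no nonempty proper
subset of which has empty boundary. -/
def IsSimpleCycle (Z : Finset (Finset ℕ)) : Prop :=
  Z ≠ ∅ ∧ bd Z = ∅ ∧ ∀ Y ⊂ Z, Y ≠ ∅ → bd Y ≠ ∅

/-- Collapsibility: `X` can be reduced to `∅` by repeatedly removing a simplex `σ ∈ X`
containing a codimension-one face contained in no other current member of `X`. -/
inductive Collapsible : Finset (Finset ℕ) → Prop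
  | empty : Collapsible ∅
  | step (X : Finset (Finset ℕ)) (σ τ : Finset ℕ) (hσ : σ ∈ X) (hτ : τ ⊆ σ)
      (hcard : τ.card + 1 = σ.card) (huniq : ∀ σ' ∈ X, τ ⊆ σ' → σ' = σ)
      (h : Collapsible (X.erase σ)) : Collapsible X

/-- The cone over `X` with apex `v`. -/
def cone (v : ℕ) (X : Finset (Finset ℕ)) : Finset (Finset ℕ) :=
  X.image (insert v)

/-- The link of the vertex `v` in `X`. -/
def link (v : ℕ) (X : Finset (Finset ℕ)) : Finset (Finset ℕ) :=
  (X.filter fun σ => v ∈ σ).image fun σ => σ.erase v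

/-- `fill Z T`: the subset `F ⊆ T` with `∂F = Z` (when it exists; it is unique when `T`
is a hypertree and `Z` a cycle). -/
noncomputable def fill (Z T : Finset (Finset ℕ)) : Finset (Finset ℕ) :=
  if h : ∃ F, F ⊆ T ∧ bd F = Z then h.choose else ∅

/-- The average filling-volume `μ(T)` of a `d`-hypertree `T` on `[n]`. -/
noncomputable def fillVolAvg (n d : ℕ) (T : Finset (Finset ℕ)) : ℝ :=
  (∑ σ ∈ simplices (rng n) d, ((fill (bd {σ}) T).card : ℝ)) / (n.choose (d + 1) : ℝ)

open Classical in
/-- The cut of `τ` in `T`: the set of `d`-simplices `σ` on `[n]` such that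
`T ⊕ {τ} ⊕ {σ}` is a `d`-hypertree on `[n]`. -/
noncomputable def cut (n d : ℕ) (τ : Finset ℕ) (T : Finset (Finset ℕ)) : Finset (Finset ℕ) :=
  (simplices (rng n) d).filter fun σ => IsHypertreeOn (rng n) d ((T ∆ {τ}) ∆ {σ})

theorem mem_bd' (Z : Finset (Finset ℕ)) (τ : Finset ℕ) :
    τ ∈ bd Z ↔ Odd (Z.filter fun σ => τ ⊆ σ ∧ τ.card + 1 = σ.card).card := by
  unfold bd
  rw [Finset.mem_filter]
  refine ⟨fun h => h.2, fun h => ⟨?_, h⟩⟩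
  obtain ⟨σ, hσ⟩ := Finset.card_pos.1 h.pos
  rw [Finset.mem_filter] at hσ
  exact Finset.mem_biUnion.2 ⟨σ, hσ.1, Finset.mem_powerset.2 hσ.2.1⟩

theorem odd_card_symmDiff (A B : Finset (Finset ℕ)) :
    Odd (A ∆ B).card ↔ ¬ (Odd A.card ↔ Odd B.card) := by
  have h1 : (A ∆ B).card = (A \ B).card + (B \ A).card := by
    rw [symmDiff_def, Finset.sup_eq_union, Finset.card_union_of_disjoint disjoint_sdiff_sdiff]
  have h2 := Finset.card_sdiff_add_card_inter A B
  have h3 := Finset.card_sdiff_add_card_inter B A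
  rw [Finset.inter_comm] at h3
  rw [h1, ← h2, ← h3]
  simp only [Nat.odd_iff]
  omega

theorem bd_symmDiff (A B : Finset (Finset ℕ)) : bd (A ∆ B) = bd A ∆ bd B := by
  ext τ
  have : ((A ∆ B).filter fun σ => τ ⊆ σ ∧ τ.card + 1 = σ.card) =
      (A.filter fun σ => τ ⊆ σ ∧ τ.card + 1 = σ.card) ∆
      (B.filter fun σ => τ ⊆ σ ∧ τ.card + 1 = σ.card) := by
    ext σ
    simp only [Finset.mem_filter, Finset.mem_symmDiff]
    tauto
  rw [Finset.mem_symmDiff, mem_bd', mem_bd', mem_bd', this, odd_card_symmDiff]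
  tauto

theorem bd_empty' : bd ∅ = ∅ := by
  simp [bd]

theorem bd_free (C : Finset (Finset ℕ)) (v : ℕ) (hC : ∀ σ ∈ C, v ∉ σ) :
    ∀ σ ∈ bd C, v ∉ σ := by
  intro τ hτ hv
  rw [mem_bd'] at hτ
  obtain ⟨σ, hσ⟩ := Finset.card_pos.1 hτ.pos
  rw [Finset.mem_filter] at hσ
  exact hC σ hσ.1 (hσ.2.1 hv)

theorem mem_cone_iff (C : Finset (Finset ℕ)) (v : ℕ) (hC : ∀ σ ∈ C, v ∉ σ) (τ : Finset ℕ) :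
    τ ∈ cone v C ↔ v ∈ τ ∧ τ.erase v ∈ C := by
  unfold cone
  rw [Finset.mem_image]
  constructor
  · rintro ⟨σ, hσ, rfl⟩
    refine ⟨Finset.mem_insert_self _ _, ?_⟩
    rwa [Finset.erase_insert (hC σ hσ)]
  · rintro ⟨h1, h2⟩
    exact ⟨_, h2, Finset.insert_erase h1⟩

theorem bd_cone (C : Finset (Finset ℕ)) (v : ℕ) (hC : ∀ σ ∈ C, v ∉ σ) :
    bd (cone v C) = C ∆ cone v (bd C) := by
  ext τ
  rw [Finset.mem_symmDiff, mem_cone_iff _ v (bd_free C v hC), mem_bd']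
  by_cases hv : v ∈ τ
  · have hτC : τ ∉ C := fun h => hC τ h hv
    have : ((cone v C).filter fun σ => τ ⊆ σ ∧ τ.card + 1 = σ.card) =
        (C.filter fun σ => τ.erase v ⊆ σ ∧ (τ.erase v).card + 1 = σ.card).image (insert v) := by
      ext σ
      unfold cone
      simp only [Finset.mem_filter, Finset.mem_image]
      constructor
      · rintro ⟨⟨ρ, hρ, rfl⟩, h1, h2⟩
        refine ⟨ρ, ⟨hρ, Finset.subset_insert_iff.1 h1, ?_⟩, rfl⟩
        rw [Finset.card_insert_of_notMem (hC ρ hρ)] at h2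
        have := Finset.card_erase_add_one hv
        omega
      · rintro ⟨ρ, ⟨hρ, h1, h2⟩, rfl⟩
        refine ⟨⟨ρ, hρ, rfl⟩, Finset.subset_insert_iff.2 h1, ?_⟩
        rw [Finset.card_insert_of_notMem (hC ρ hρ)]
        have := Finset.card_erase_add_one hv
        omega
    rw [this, Finset.card_image_of_injOn, mem_bd']
    · tauto
    · intro a ha b hb hab
      have ha' := hC a (Finset.mem_filter.1 ha).1
      have hb' := hC b (Finset.mem_filter.1 hb).1
      have := congrArg (fun s => Finset.erase s v) hab
      simpa [Finset.erase_insert ha', Finset.erase_insert hb'] using this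
  · have : ((cone v C).filter fun σ => τ ⊆ σ ∧ τ.card + 1 = σ.card) =
        (C.filter fun σ => σ = τ).image (insert v) := by
      ext σ
      unfold cone
      simp only [Finset.mem_filter, Finset.mem_image]
      constructor
      · rintro ⟨⟨ρ, hρ, rfl⟩, h1, h2⟩
        refine ⟨ρ, ⟨hρ, ?_⟩, rfl⟩
        rw [Finset.card_insert_of_notMem (hC ρ hρ)] at h2
        have h3 : τ ⊆ ρ := (Finset.subset_insert_iff_of_notMem hv).1 h1
        exact (Finset.eq_of_subset_of_card_le h3 (by omega)).symm
      · rintro ⟨ρ, ⟨hρ, rfl⟩, rfl⟩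
        refine ⟨⟨ρ, hρ, rfl⟩, Finset.subset_insert _ _, ?_⟩
        rw [Finset.card_insert_of_notMem hv]
    rw [this, Finset.filter_eq']
    by_cases h : τ ∈ C <;> simp [h, hv]

theorem link_free (Z : Finset (Finset ℕ)) (v : ℕ) : ∀ σ ∈ link v Z, v ∉ σ := by
  intro σ hσ
  unfold link at hσ
  obtain ⟨ρ, _, rfl⟩ := Finset.mem_image.1 hσ
  exact Finset.notMem_erase _ _

theorem split_link (Z : Finset (Finset ℕ)) (v : ℕ) :
    Z = (Z.filter fun σ => v ∉ σ) ∆ cone v (link v Z) := by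
  ext σ
  rw [Finset.mem_symmDiff, mem_cone_iff _ v (link_free Z v), Finset.mem_filter]
  have key : v ∈ σ → (σ.erase v ∈ link v Z ↔ σ ∈ Z) := by
    intro hv
    unfold link
    rw [Finset.mem_image]
    constructor
    · rintro ⟨ρ, hρ, h⟩
      rw [Finset.mem_filter] at hρ
      have := congrArg (insert v) h
      rw [Finset.insert_erase hρ.2, Finset.insert_erase hv] at this
      exact this ▸ hρ.1
    · intro h
      exact ⟨σ, Finset.mem_filter.2 ⟨h, hv⟩, rfl⟩
  tauto

theorem cycle_split (Z : Finset (Finset ℕ)) (v : ℕ) (hZ : bd Z = ∅) :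
    bd (Z.filter fun σ => v ∉ σ) = link v Z ∧ bd (link v Z) = ∅ := by
  have hA : ∀ σ ∈ Z.filter (fun σ => v ∉ σ), v ∉ σ := fun σ h => (Finset.mem_filter.1 h).2
  have h := hZ
  rw [split_link Z v, bd_symmDiff, bd_cone _ v (link_free Z v)] at h
  have fA := bd_free _ v hA
  have fB := link_free Z v
  have fBB := bd_free _ v fB
  have hmem : ∀ τ, ¬ (τ ∈ _) := Finset.eq_empty_iff_forall_notMem.1 h
  simp only [Finset.mem_symmDiff, mem_cone_iff _ v fBB] at hmem
  constructor
  · ext τ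
    have h1 := hmem τ
    have h2 := fA τ
    have h3 := fB τ
    tauto
  · rw [Finset.eq_empty_iff_forall_notMem]
    intro τ hτ
    have hv := fBB τ hτ
    have h1 := hmem (insert v τ)
    have h2 := fA (insert v τ)
    have h3 := fB (insert v τ)
    rw [Finset.erase_insert hv] at h1
    have h4 := Finset.mem_insert_self v τ
    tauto

theorem mem_simplices' (V : Finset ℕ) (d : ℕ) (σ : Finset ℕ) :
    σ ∈ simplices V d ↔ σ ⊆ V ∧ σ.card = d + 1 := by
  simp [simplices]

theorem hypertree_span (V : Finset ℕ) (d : ℕ) (T : Finset (Finset ℕ))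
    (hT : IsHypertreeOn V d T) (σ : Finset ℕ) (hσ : σ ∈ simplices V d) :
    ∃ F ⊆ T, bd F = bd {σ} := by
  obtain ⟨h1, h2, h3⟩ := hT
  by_cases hm : σ ∈ T
  · exact ⟨{σ}, Finset.singleton_subset_iff.2 hm, rfl⟩
  have hn : ¬ IsAcyclic (insert σ T) := by
    intro h
    have := h3 _ (Finset.subset_insert _ _) (Finset.insert_subset hσ h1) h
    exact hm (this ▸ Finset.mem_insert_self σ T)
  unfold IsAcyclic at hn
  push Not at hn
  obtain ⟨Z, hZ, hne, hb⟩ := hn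
  have hσZ : σ ∈ Z := by
    by_contra h
    exact h2 Z ((Finset.subset_insert_iff_of_notMem h).1 hZ) hne.ne_empty hb
  refine ⟨Z.erase σ, Finset.subset_insert_iff.1 hZ, ?_⟩
  have : Z = Z.erase σ ∆ {σ} := by
    ext ρ
    simp only [Finset.mem_symmDiff, Finset.mem_erase, Finset.mem_singleton]
    by_cases h : ρ = σ
    · subst h; simp [hσZ]
    · simp [h]
  rw [this, bd_symmDiff] at hb
  exact symmDiff_eq_bot.1 hb

theorem hypertree_span_all (V : Finset ℕ) (d : ℕ) (T : Finset (Finset ℕ))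
    (hT : IsHypertreeOn V d T) (D : Finset (Finset ℕ)) (hD : D ⊆ simplices V d) :
    ∃ F ⊆ T, bd F = bd D := by
  induction D using Finset.induction_on with
  | empty => exact ⟨∅, Finset.empty_subset _, rfl⟩
  | insert σ D hσ ih =>
    obtain ⟨F, hF, hb⟩ := ih ((Finset.subset_insert _ _).trans hD)
    obtain ⟨F', hF', hb'⟩ := hypertree_span V d T hT σ (hD (Finset.mem_insert_self _ _))
    refine ⟨F ∆ F', ?_, ?_⟩
    · intro ρ h
      rw [Finset.mem_symmDiff] at h
      rcases h with h | h
      · exact hF h.1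
      · exact hF' h.1
    · have : insert σ D = D ∆ {σ} := by
        ext ρ
        simp only [Finset.mem_symmDiff, Finset.mem_insert, Finset.mem_singleton]
        by_cases h : ρ = σ
        · subst h; simp [hσ]
        · simp [h]
      rw [this, bd_symmDiff, bd_symmDiff, hb, hb']

theorem hypertree_of_span (V : Finset ℕ) (d : ℕ) (T : Finset (Finset ℕ))
    (hT : T ⊆ simplices V d) (hA : IsAcyclic T)
    (hS : ∀ σ ∈ simplices V d, ∃ F ⊆ T, bd F = bd {σ}) : IsHypertreeOn V d T := by
  refine ⟨hT, hA, fun G hTG hG hGA => ?_⟩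
  refine Finset.Subset.antisymm (fun σ hσ => ?_) hTG
  by_contra hn
  obtain ⟨F, hF, hb⟩ := hS σ (hG hσ)
  refine hGA (F ∆ {σ}) ?_ ?_ ?_
  · intro ρ h
    rw [Finset.mem_symmDiff, Finset.mem_singleton] at h
    rcases h with h | h
    · exact hTG (hF h.1)
    · exact h.1 ▸ hσ
  · apply Finset.ne_empty_of_mem (a := σ)
    rw [Finset.mem_symmDiff]
    exact Or.inr ⟨Finset.mem_singleton_self _, fun h => hn (hF h)⟩
  · rw [bd_symmDiff, hb, symmDiff_self]; rfl

theorem cone_simplices (V : Finset ℕ) (v d : ℕ) (C : Finset (Finset ℕ))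
    (hf : ∀ σ ∈ C, v ∉ σ) (hC : C ⊆ simplices V d) :
    cone v C ⊆ simplices (insert v V) (d + 1) := by
  intro σ hσ
  unfold cone at hσ
  obtain ⟨ρ, hρ, rfl⟩ := Finset.mem_image.1 hσ
  have := (mem_simplices' _ _ _).1 (hC hρ)
  rw [mem_simplices', Finset.card_insert_of_notMem (hf ρ hρ), this.2]
  exact ⟨Finset.insert_subset_insert _ this.1, rfl⟩

theorem cycle_fill (V : Finset ℕ) (w d : ℕ) (hw : w ∈ V) (C : Finset (Finset ℕ))
    (hC : C ⊆ simplices V d) (hb : bd C = ∅) : ∃ D ⊆ simplices V (d + 1), bd D = C := by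
  have hA : ∀ σ ∈ C.filter (fun σ => w ∉ σ), w ∉ σ := fun σ h => (Finset.mem_filter.1 h).2
  refine ⟨cone w (C.filter fun σ => w ∉ σ), ?_, ?_⟩
  · have := cone_simplices V w d _ hA ((Finset.filter_subset _ _).trans hC)
    rwa [Finset.insert_eq_of_mem hw] at this
  · rw [bd_cone _ w hA, (cycle_split C w hb).1]
    exact (split_link C w).symm

theorem cone_symmDiff (v : ℕ) (A B : Finset (Finset ℕ)) (hA : ∀ σ ∈ A, v ∉ σ)
    (hB : ∀ σ ∈ B, v ∉ σ) : cone v (A ∆ B) = cone v A ∆ cone v B := by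
  have hAB : ∀ σ ∈ A ∆ B, v ∉ σ := by
    intro σ h
    rw [Finset.mem_symmDiff] at h
    rcases h with h | h
    · exact hA σ h.1
    · exact hB σ h.1
  ext σ
  simp only [Finset.mem_symmDiff, mem_cone_iff _ v hA, mem_cone_iff _ v hB, mem_cone_iff _ v hAB]
  tauto

/-- For `v ∉ [n]`, if `X` is a `d`-hypertree and `Y` a `(d-1)`-hypertree on `[n]`, then
`Ext_v(X,Y) = X ⊕ Cone_v(Y)` is a `d`-hypertree on `[n] ∪ {v}`. -/
theorem conical_extension_hypertree (n d : ℕ) (hd : 1 ≤ d) (v : ℕ) (hv : v ∉ rng n)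
    (X Y : Finset (Finset ℕ)) (hX : IsHypertreeOn (rng n) d X)
    (hY : IsHypertreeOn (rng n) (d - 1) Y) :
    IsHypertreeOn (insert v (rng n)) d (X ∆ cone v Y) := by
  obtain ⟨e, rfl⟩ : ∃ e, d = e + 1 := ⟨d - 1, by omega⟩
  rw [Nat.add_sub_cancel] at hY
  have free : ∀ k, ∀ C ⊆ simplices (rng n) k, ∀ σ ∈ C, v ∉ σ := by
    intro k C hC σ hσ h
    exact hv (((mem_simplices' _ _ _).1 (hC hσ)).1 h)
  have fX := free _ X hX.1
  have fY := free _ Y hY.1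
  have memT : ∀ σ, σ ∈ X ∆ cone v Y ↔ (σ ∈ X ∨ (v ∈ σ ∧ σ.erase v ∈ Y)) := by
    intro σ
    rw [Finset.mem_symmDiff, mem_cone_iff _ v fY]
    have := fX σ
    tauto
  apply hypertree_of_span
  · intro σ hσ
    rw [Finset.mem_symmDiff] at hσ
    rcases hσ with h | h
    · have := (mem_simplices' _ _ _).1 (hX.1 h.1)
      exact (mem_simplices' _ _ _).2 ⟨this.1.trans (Finset.subset_insert _ _), this.2⟩
    · exact cone_simplices _ v e Y fY hY.1 h.1
  · intro Z hZ hne hb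
    have hl : link v Z ⊆ Y := by
      intro ρ hρ
      unfold link at hρ
      obtain ⟨σ, hσ, rfl⟩ := Finset.mem_image.1 hρ
      rw [Finset.mem_filter] at hσ
      rcases (memT σ).1 (hZ hσ.1) with h | h
      · exact absurd hσ.2 (fX σ h)
      · exact h.2
    have hl0 : link v Z = ∅ := by
      by_contra h
      exact hY.2.1 _ hl h (cycle_split Z v hb).2
    refine hX.2.1 Z ?_ hne hb
    intro σ hσ
    rcases (memT σ).1 (hZ hσ) with h | h
    · exact h
    · have : σ.erase v ∈ link v Z := by
        unfold link
        exact Finset.mem_image.2 ⟨σ, Finset.mem_filter.2 ⟨hσ, h.1⟩, rfl⟩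
      rw [hl0] at this
      exact absurd this (Finset.notMem_empty _)
  · intro σ hσ
    rw [mem_simplices'] at hσ
    by_cases hvσ : v ∈ σ
    · have hτ : σ.erase v ∈ simplices (rng n) e := by
        rw [mem_simplices']
        refine ⟨Finset.subset_insert_iff.1 hσ.1, ?_⟩
        rw [Finset.card_erase_of_mem hvσ, hσ.2]
        rfl
      obtain ⟨F, hF, hFb⟩ := hypertree_span _ _ _ hY _ hτ
      have sτ : {σ.erase v} ⊆ simplices (rng n) e := Finset.singleton_subset_iff.2 hτ
      have hC : F ∆ {σ.erase v} ⊆ simplices (rng n) e := by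
        intro ρ h
        rw [Finset.mem_symmDiff] at h
        rcases h with h | h
        · exact hY.1 (hF h.1)
        · exact sτ h.1
      have hCb : bd (F ∆ {σ.erase v}) = ∅ := by
        rw [bd_symmDiff, hFb, symmDiff_self]; rfl
      obtain ⟨w, hw⟩ : (σ.erase v).Nonempty := by
        rw [← Finset.card_pos, ((mem_simplices' _ _ _).1 hτ).2]
        omega
      have hw' := ((mem_simplices' _ _ _).1 hτ).1 hw
      obtain ⟨D, hD, hDb⟩ := cycle_fill _ w e hw' _ hC hCb
      obtain ⟨F', hF', hFb'⟩ := hypertree_span_all _ _ _ hX D hD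
      have fF : ∀ ρ ∈ F, v ∉ ρ := fun ρ h => fY ρ (hF h)
      refine ⟨F' ∆ cone v F, ?_, ?_⟩
      · intro ρ h
        rw [Finset.mem_symmDiff, mem_cone_iff _ v fF] at h
        rw [memT]
        rcases h with h | h
        · exact Or.inl (hF' h.1)
        · exact Or.inr ⟨h.1.1, hF h.1.2⟩
      · have h1 := bd_cone _ v (free _ _ hC)
        have h2 : cone v {σ.erase v} = {σ} := by
          simp [cone, Finset.insert_erase hvσ]
        have h3 : cone v (∅ : Finset (Finset ℕ)) = ∅ := rfl
        rw [cone_symmDiff v _ _ fF (free _ _ sτ), bd_symmDiff, hCb, h2, h3] at h1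
        rw [bd_symmDiff, hFb', hDb]
        have h4 : ∀ A : Finset (Finset ℕ), A ∆ ∅ = A := fun A => symmDiff_bot A
        rw [h4] at h1
        rw [← h1, symmDiff_comm, symmDiff_symmDiff_cancel_left]
    · obtain ⟨F, hF, hFb⟩ := hypertree_span _ _ _ hX σ ((mem_simplices' _ _ _).2
        ⟨(Finset.subset_insert_iff_of_notMem hvσ).1 hσ.1, hσ.2⟩)
      exact ⟨F, fun ρ h => (memT ρ).2 (Or.inl (hF h)), hFb⟩
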